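/- Let n ≥ 3, 0 < μ < n, and set 2_μ^* = (2n−μ)/(n−2). Let δ > 0 and let ψ : ℝⁿ → ℝ be a smooth function with 0 ≤ ψ ≤ 1 on ℝⁿ, ψ ≡ 1 on the closed ball of radius δ centered at 0, and ψ ≡ 0 outside the open ball of radius 2δ centered at 0. For ε ∈ (0,1) define U_ε : ℝⁿ → ℝ by U_ε(x) = ( ε / (ε² + ‖x‖²) )^{(n−2)/2} and set u_ε = ψ·U_ε. Then there exists C > 0 such that for every ε ∈ (0,1), | ∫_{ℝⁿ}∫_{ℝⁿ} u_ε(x)^{2_μ^*} u_ε(y)^{2_μ^*} / ‖x−y‖^μ dx dy − ∫_{ℝⁿ}∫_{ℝⁿ} U_1(x)^{2_μ^*} U_1(y)^{2_μ^*} / ‖x−y‖^μ dx dy | ≤ C ε^{n}. -/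

import Mathlib

open MeasureTheory ENNReal

/-!
The critical Choquard energy is invariant under `u ↦ ε^(-(n-2)/2) u(ε⁻¹ ·)`, and this rescaling
turns `U_1` into `U_ε`. Undoing it replaces `u_ε` by a function which is dominated by `U_1` and
agrees with it on the ball of radius `δ / ε`, so only pairs `(x, y)` with one point outside that
ball contribute to the difference of the energies. Since `U_1 ^ 2_μ^*` decays like `‖x‖^(-(2n-μ))`
and its Riesz potential like `‖x‖^(-μ)`, this contribution is at most a multiple of the integral of
`‖x‖^(-2n)` outside the ball, which is of order `(δ / ε)^(-n)`.
-/

open Module Metric Set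

noncomputable section

section RieszIntegrand

variable {E : Type*} [NormedAddCommGroup E]

/-- The integrand of the Riesz energy: the interaction `f(x) f(y) / ‖x - y‖^μ` of the two points of
a pair, which is `0` on the diagonal when `μ ≠ 0`. -/
def rieszIntegrand (μ : ℝ) (f : E → ℝ) (z : E × E) : ℝ :=
  f z.1 * f z.2 / ‖z.1 - z.2‖ ^ μ

lemma rieszIntegrand_swap (μ : ℝ) (f : E → ℝ) (z : E × E) :
    rieszIntegrand μ f z.swap = rieszIntegrand μ f z := by
  simp only [rieszIntegrand, Prod.fst_swap, Prod.snd_swap, norm_sub_rev z.2, mul_comm (f z.2)]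

lemma rieszIntegrand_nonneg {μ : ℝ} {f : E → ℝ} (hf : ∀ x, 0 ≤ f x) (z : E × E) :
    0 ≤ rieszIntegrand μ f z :=
  div_nonneg (mul_nonneg (hf _) (hf _)) (by positivity)

lemma abs_rieszIntegrand_le {μ M : ℝ} {f g : E → ℝ} (h : ∀ x, |f x| ≤ M * g x) (z : E × E) :
    |rieszIntegrand μ f z| ≤ M ^ 2 * rieszIntegrand μ g z := by
  have hprod : |f z.1| * |f z.2| ≤ M * g z.1 * (M * g z.2) :=
    mul_le_mul (h _) (h _) (abs_nonneg _) ((abs_nonneg _).trans (h _))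
  calc |rieszIntegrand μ f z| = |f z.1| * |f z.2| / ‖z.1 - z.2‖ ^ μ := by
        rw [rieszIntegrand, abs_div, abs_mul, abs_of_nonneg (by positivity : 0 ≤ ‖z.1 - z.2‖ ^ μ)]
    _ ≤ M * g z.1 * (M * g z.2) / ‖z.1 - z.2‖ ^ μ := by gcongr
    _ = M ^ 2 * rieszIntegrand μ g z := by rw [rieszIntegrand]; ring

lemma measurable_rieszIntegrand [MeasurableSpace E] [BorelSpace E] [SecondCountableTopology E]
    (μ : ℝ) {f : E → ℝ} (hf : Measurable f) : Measurable (rieszIntegrand μ f) := by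
  unfold rieszIntegrand
  fun_prop

lemma abs_rieszIntegrand_sub_le {μ M R : ℝ} {f g w : E → ℝ} (hw : ∀ x, 0 ≤ w x)
    (hf : ∀ x, |f x| ≤ M * w x) (hg : ∀ x, |g x| ≤ M * w x) (hfg : EqOn f g (closedBall 0 R))
    (z : E × E) :
    |rieszIntegrand μ f z - rieszIntegrand μ g z| ≤
      2 * M ^ 2 * (((closedBall 0 R)ᶜ ×ˢ univ).indicator (rieszIntegrand μ w) z +
        ((closedBall 0 R)ᶜ ×ˢ univ).indicator (rieszIntegrand μ w) z.swap) := by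
  set S : Set (E × E) := (closedBall 0 R)ᶜ ×ˢ univ with hS
  have hind (z : E × E) : 0 ≤ S.indicator (rieszIntegrand μ w) z :=
    indicator_nonneg (fun z _ ↦ rieszIntegrand_nonneg hw z) z
  by_cases hz : z ∈ S ∨ z.swap ∈ S
  · have htail : rieszIntegrand μ w z ≤
        S.indicator (rieszIntegrand μ w) z + S.indicator (rieszIntegrand μ w) z.swap := by
      rcases hz with hz | hz
      · rw [indicator_of_mem hz]
        exact le_add_of_nonneg_right (hind _)
      · rw [indicator_of_mem hz, rieszIntegrand_swap]
        exact le_add_of_nonneg_left (hind _)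
    calc |rieszIntegrand μ f z - rieszIntegrand μ g z|
        ≤ |rieszIntegrand μ f z| + |rieszIntegrand μ g z| := abs_sub _ _
      _ ≤ M ^ 2 * rieszIntegrand μ w z + M ^ 2 * rieszIntegrand μ w z :=
          add_le_add (abs_rieszIntegrand_le hf z) (abs_rieszIntegrand_le hg z)
      _ = 2 * M ^ 2 * rieszIntegrand μ w z := by ring
      _ ≤ _ := by gcongr
  · obtain ⟨h1, h2⟩ : z.1 ∈ closedBall 0 R ∧ z.2 ∈ closedBall 0 R := by
      simpa [hS, not_or] using hz
    rw [rieszIntegrand, rieszIntegrand, hfg h1, hfg h2, sub_self, abs_zero]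
    exact mul_nonneg (by positivity) (add_nonneg (hind _) (hind _))

lemma ball_eq_preimage_sub_left (x : E) (r : ℝ) : ball x r = (x - ·) ⁻¹' ball 0 r := by
  ext y
  rw [mem_preimage, mem_ball_zero_iff, mem_ball', dist_eq_norm]

-- The radius is chosen so that `1 + ‖y‖` is at least the radius for every `y` in the ball.
lemma one_add_norm_rpow_div_le {a μ : ℝ} (ha : 0 ≤ a) (hμ0 : 0 ≤ μ) (x y : E) :
    (1 + ‖y‖) ^ (-a) / ‖x - y‖ ^ μ ≤
      ((1 + ‖x‖) / 2) ^ (-μ) * (1 + ‖y‖) ^ (-a) +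
        ((1 + ‖x‖) / 2) ^ (-a) *
          (ball x ((1 + ‖x‖) / 2)).indicator (fun y ↦ (‖x - y‖ ^ μ)⁻¹) y := by
  set r := (1 + ‖x‖) / 2 with hr
  have hr0 : 0 < r := by positivity
  by_cases hy : y ∈ ball x r
  · have hry : r ≤ 1 + ‖y‖ := by
      have hxy : ‖x - y‖ < r := by rwa [mem_ball', dist_eq_norm] at hy
      linarith [norm_sub_norm_le x y]
    have hdecay : (1 + ‖y‖) ^ (-a) ≤ r ^ (-a) :=
      Real.rpow_le_rpow_of_nonpos hr0 hry (by linarith)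
    rw [indicator_of_mem hy, div_eq_mul_inv]
    exact le_add_of_nonneg_of_le (by positivity) (by gcongr)
  · have hxy : r ≤ ‖x - y‖ := by rwa [mem_ball', dist_eq_norm, not_lt] at hy
    rw [indicator_of_notMem hy, mul_zero, add_zero, Real.rpow_neg hr0.le, div_eq_inv_mul]
    gcongr

end RieszIntegrand

/-- The Riesz energy `∬ f(x) f(y) / ‖x - y‖^μ` of a function. The Choquard double integral of `u` is
the Riesz energy of a power of `u`. -/
def rieszEnergy {E : Type*} [NormedAddCommGroup E] [MeasurableSpace E] (μ : ℝ) (ν : Measure E)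
    (f : E → ℝ) : ℝ :=
  ∫ x, ∫ y, rieszIntegrand μ f (x, y) ∂ν ∂ν

section Haar

variable {E : Type*} [NormedAddCommGroup E] [NormedSpace ℝ E] [FiniteDimensional ℝ E]
  [MeasurableSpace E] [BorelSpace E] (ν : Measure E) [ν.IsAddHaarMeasure] {a μ : ℝ}

lemma rieszEnergy_rescale (f : E → ℝ) {ε : ℝ} (hε : 0 < ε) :
    rieszEnergy μ ν (fun x ↦ ε ^ (-((2 * finrank ℝ E - μ) / 2)) * f (ε⁻¹ • x)) =
      rieszEnergy μ ν f := by
  have hintegrand (x y : E) :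
      rieszIntegrand μ (fun x ↦ ε ^ (-((2 * finrank ℝ E - μ) / 2)) * f (ε⁻¹ • x)) (x, y) =
        ε ^ (-2 * finrank ℝ E : ℝ) * rieszIntegrand μ f (ε⁻¹ • x, ε⁻¹ • y) := by
    have hnorm : ‖x - y‖ = ε * ‖ε⁻¹ • x - ε⁻¹ • y‖ := by
      rw [← smul_sub, norm_smul, Real.norm_of_nonneg (by positivity), mul_inv_cancel_left₀ hε.ne']
    have hpow : ε ^ (-2 * finrank ℝ E : ℝ) =
        ε ^ (-((2 * finrank ℝ E - μ) / 2)) * ε ^ (-((2 * finrank ℝ E - μ) / 2)) / ε ^ μ := by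
      rw [← Real.rpow_add hε, ← Real.rpow_sub hε]
      ring_nf
    simp only [rieszIntegrand, hnorm, Real.mul_rpow hε.le (norm_nonneg _), hpow]
    ring
  have hinner (x : E) : ∫ y, rieszIntegrand μ f (x, ε⁻¹ • y) ∂ν =
      ε ^ finrank ℝ E * ∫ y, rieszIntegrand μ f (x, y) ∂ν :=
    Measure.integral_comp_inv_smul_of_nonneg ν (fun y ↦ rieszIntegrand μ f (x, y)) hε.le
  have houter : ∫ x, ∫ y, rieszIntegrand μ f (ε⁻¹ • x, y) ∂ν ∂ν =
      ε ^ finrank ℝ E * rieszEnergy μ ν f :=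
    Measure.integral_comp_inv_smul_of_nonneg ν (fun x ↦ ∫ y, rieszIntegrand μ f (x, y) ∂ν) hε.le
  rw [rieszEnergy]
  simp_rw [hintegrand, integral_const_mul, hinner, integral_const_mul, houter]
  have hexponent : (-2 * finrank ℝ E + finrank ℝ E + finrank ℝ E : ℝ) = 0 := by ring
  rw [← Real.rpow_natCast, ← mul_assoc, ← mul_assoc, ← Real.rpow_add hε, ← Real.rpow_add hε,
    hexponent, Real.rpow_zero, one_mul]

lemma setIntegral_ball_inv_norm_sub_rpow (x : E) {r : ℝ} (hr : 0 < r) :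
    ∫ y in ball x r, (‖x - y‖ ^ μ)⁻¹ ∂ν =
      r ^ (finrank ℝ E - μ) * ∫ y in ball 0 1, (‖y‖ ^ μ)⁻¹ ∂ν := by
  have htranslate : ∫ y in ball x r, (‖x - y‖ ^ μ)⁻¹ ∂ν = ∫ y in ball 0 r, (‖y‖ ^ μ)⁻¹ ∂ν := by
    rw [ball_eq_preimage_sub_left]
    exact (Measure.measurePreserving_sub_left ν x).setIntegral_preimage_emb
      (MeasurableEquiv.subLeft x).measurableEmbedding (fun y ↦ (‖y‖ ^ μ)⁻¹) _
  have hscale := Measure.setIntegral_comp_smul_of_pos ν (fun y ↦ (‖y‖ ^ μ)⁻¹) (ball 0 1) hr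
  simp_rw [norm_smul, Real.norm_of_nonneg hr.le, Real.mul_rpow hr.le (norm_nonneg _), mul_inv,
    integral_const_mul, smul_unitBall_of_pos hr, smul_eq_mul] at hscale
  rw [htranslate, Real.rpow_sub hr, Real.rpow_natCast, div_eq_mul_inv, mul_assoc, hscale,
    mul_inv_cancel_left₀ (by positivity)]

lemma integrableOn_ball_inv_norm_sub_rpow (hμ0 : 0 ≤ μ) (hμ : μ < finrank ℝ E) (x : E) (r : ℝ) :
    IntegrableOn (fun y ↦ (‖x - y‖ ^ μ)⁻¹) (ball x r) ν := by
  have hcentered : IntegrableOn (fun y : E ↦ (‖y‖ ^ μ)⁻¹) (ball 0 r) ν := by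
    refine integrableOn_ball_of_norm_le_rpow (C := 1) (α := μ)
      (Nat.one_le_iff_ne_zero.2 fun h ↦ ?_) hμ (.of_forall fun y ↦ ?_) ?_
    · exact (hμ0.trans_lt hμ).ne' (by simp [h])
    · rw [Real.norm_of_nonneg (by positivity), one_mul, Real.rpow_neg (norm_nonneg _)]
    · exact Measurable.aestronglyMeasurable (by fun_prop)
  rw [ball_eq_preimage_sub_left]
  exact ((Measure.measurePreserving_sub_left ν x).integrableOn_comp_preimage
    (MeasurableEquiv.subLeft x).measurableEmbedding).2 hcentered

lemma setIntegral_compl_closedBall_one_add_norm_rpow_le (ha : finrank ℝ E < a) {R : ℝ}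
    (hR : 0 < R) :
    ∫ x in (closedBall 0 R)ᶜ, (1 + ‖x‖) ^ (-a) ∂ν ≤
      2 ^ a * (∫ x, (1 + ‖x‖) ^ (-a) ∂ν) * R ^ (finrank ℝ E - a) := by
  have ha0 : 0 ≤ a := (finrank ℝ E).cast_nonneg.trans ha.le
  have hint : Integrable (fun x : E ↦ (R / 2) ^ (-a) * (1 + ‖R⁻¹ • x‖) ^ (-a)) ν :=
    ((integrable_one_add_norm ha).comp_smul (inv_ne_zero hR.ne')).const_mul _
  calc ∫ x in (closedBall 0 R)ᶜ, (1 + ‖x‖) ^ (-a) ∂ν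
      ≤ ∫ x in (closedBall 0 R)ᶜ, (R / 2) ^ (-a) * (1 + ‖R⁻¹ • x‖) ^ (-a) ∂ν := by
        refine setIntegral_mono_on (integrable_one_add_norm ha).integrableOn hint.integrableOn
          measurableSet_closedBall.compl fun x hx ↦ ?_
        have hx : R < ‖x‖ := by simpa using hx
        rw [← Real.mul_rpow (by positivity) (by positivity)]
        refine Real.rpow_le_rpow_of_nonpos (by positivity) ?_ (neg_nonpos.2 ha0)
        rw [norm_smul, norm_inv, Real.norm_of_nonneg hR.le]
        field_simp
        linarith
    _ ≤ ∫ x, (R / 2) ^ (-a) * (1 + ‖R⁻¹ • x‖) ^ (-a) ∂ν :=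
        setIntegral_le_integral hint (.of_forall fun x ↦ by positivity)
    _ = (R / 2) ^ (-a) * (R ^ finrank ℝ E * ∫ x, (1 + ‖x‖) ^ (-a) ∂ν) := by
        rw [integral_const_mul,
          Measure.integral_comp_inv_smul_of_nonneg ν (fun x ↦ (1 + ‖x‖) ^ (-a)) hR.le, smul_eq_mul]
    _ = 2 ^ a * (∫ x, (1 + ‖x‖) ^ (-a) ∂ν) * R ^ (finrank ℝ E - a) := by
        rw [Real.div_rpow hR.le zero_le_two, Real.rpow_neg zero_le_two, Real.rpow_sub hR,
          Real.rpow_neg hR.le, Real.rpow_natCast]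
        field_simp

lemma integrable_one_add_norm_rpow_div (ha : finrank ℝ E < a) (hμ0 : 0 ≤ μ) (hμ : μ < finrank ℝ E)
    (x : E) : Integrable (fun y ↦ (1 + ‖y‖) ^ (-a) / ‖x - y‖ ^ μ) ν := by
  have hbound := ((integrable_one_add_norm (μ := ν) ha).const_mul (((1 + ‖x‖) / 2) ^ (-μ))).add
    (((integrableOn_ball_inv_norm_sub_rpow ν hμ0 hμ x ((1 + ‖x‖) / 2)).integrable_indicator
      measurableSet_ball).const_mul (((1 + ‖x‖) / 2) ^ (-a)))
  refine hbound.mono' (Measurable.aestronglyMeasurable (by fun_prop)) (.of_forall fun y ↦ ?_)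
  rw [Real.norm_of_nonneg (by positivity)]
  exact one_add_norm_rpow_div_le (hμ0.trans (hμ.trans ha).le) hμ0 x y

lemma exists_integral_one_add_norm_rpow_div_le (ha : finrank ℝ E < a) (hμ0 : 0 ≤ μ)
    (hμ : μ < finrank ℝ E) :
    ∃ C, 0 ≤ C ∧ ∀ x : E, ∫ y, (1 + ‖y‖) ^ (-a) / ‖x - y‖ ^ μ ∂ν ≤ C * (1 + ‖x‖) ^ (-μ) := by
  set A := ∫ y in ball (0 : E) 1, (‖y‖ ^ μ)⁻¹ ∂ν
  set B := ∫ y : E, (1 + ‖y‖) ^ (-a) ∂ν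
  have hA0 : 0 ≤ A := integral_nonneg fun y ↦ by positivity
  have hB0 : 0 ≤ B := integral_nonneg fun y ↦ by positivity
  refine ⟨2 ^ μ * (B + (1 / 2) ^ (finrank ℝ E - a) * A),
    mul_nonneg (by positivity) (add_nonneg hB0 (mul_nonneg (by positivity) hA0)), fun x ↦ ?_⟩
  set r := (1 + ‖x‖) / 2 with hr
  have hr0 : 0 < r := by positivity
  have hfar := (integrable_one_add_norm (μ := ν) ha).const_mul (r ^ (-μ))
  have hnear := ((integrableOn_ball_inv_norm_sub_rpow ν hμ0 hμ x r).integrable_indicator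
    measurableSet_ball).const_mul (r ^ (-a))
  calc ∫ y, (1 + ‖y‖) ^ (-a) / ‖x - y‖ ^ μ ∂ν
      ≤ ∫ y, (r ^ (-μ) * (1 + ‖y‖) ^ (-a) +
          r ^ (-a) * (ball x r).indicator (fun y ↦ (‖x - y‖ ^ μ)⁻¹) y) ∂ν :=
        integral_mono (integrable_one_add_norm_rpow_div ν ha hμ0 hμ x) (hfar.add hnear)
          (one_add_norm_rpow_div_le (hμ0.trans (hμ.trans ha).le) hμ0 x)
    _ = r ^ (-μ) * B + r ^ (-a) * (r ^ (finrank ℝ E - μ) * A) := by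
        rw [integral_add hfar hnear, integral_const_mul, integral_const_mul,
          integral_indicator measurableSet_ball, setIntegral_ball_inv_norm_sub_rpow ν x hr0]
    _ = r ^ (-μ) * (B + r ^ (finrank ℝ E - a) * A) := by
        rw [mul_add, ← mul_assoc, ← mul_assoc, ← Real.rpow_add hr0, ← Real.rpow_add hr0]
        ring_nf
    _ ≤ r ^ (-μ) * (B + (1 / 2) ^ (finrank ℝ E - a) * A) := by
        have hrpow : r ^ (finrank ℝ E - a) ≤ (1 / 2) ^ (finrank ℝ E - a) :=
          Real.rpow_le_rpow_of_nonpos (by norm_num) (by linarith [norm_nonneg x]) (by linarith)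
        gcongr
    _ = 2 ^ μ * (B + (1 / 2) ^ (finrank ℝ E - a) * A) * (1 + ‖x‖) ^ (-μ) := by
        rw [hr, Real.div_rpow (by positivity) zero_le_two, Real.rpow_neg zero_le_two]
        field_simp

lemma exists_integral_rieszIntegrand_one_add_norm_le (ha : finrank ℝ E < a) (hμ0 : 0 ≤ μ)
    (hμ : μ < finrank ℝ E) :
    ∃ C, 0 ≤ C ∧ ∀ x : E, ∫ y, rieszIntegrand μ (fun x ↦ (1 + ‖x‖) ^ (-a)) (x, y) ∂ν ≤
      C * (1 + ‖x‖) ^ (-(a + μ)) := by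
  obtain ⟨C, hC, hpotential⟩ := exists_integral_one_add_norm_rpow_div_le ν ha hμ0 hμ
  refine ⟨C, hC, fun x ↦ ?_⟩
  simp only [rieszIntegrand, mul_div_assoc, integral_const_mul]
  calc (1 + ‖x‖) ^ (-a) * ∫ y, (1 + ‖y‖) ^ (-a) / ‖x - y‖ ^ μ ∂ν
      ≤ (1 + ‖x‖) ^ (-a) * (C * (1 + ‖x‖) ^ (-μ)) := by gcongr; exact hpotential x
    _ = C * (1 + ‖x‖) ^ (-(a + μ)) := by
        rw [neg_add, Real.rpow_add (by positivity)]
        ring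

lemma integrable_rieszIntegrand_one_add_norm (ha : finrank ℝ E < a) (hμ0 : 0 ≤ μ)
    (hμ : μ < finrank ℝ E) :
    Integrable (rieszIntegrand μ fun x : E ↦ (1 + ‖x‖) ^ (-a)) (ν.prod ν) := by
  obtain ⟨C, -, hslice⟩ := exists_integral_rieszIntegrand_one_add_norm_le ν ha hμ0 hμ
  have hmeas : Measurable (rieszIntegrand μ fun x : E ↦ (1 + ‖x‖) ^ (-a)) :=
    measurable_rieszIntegrand μ (by fun_prop)
  have hnonneg := rieszIntegrand_nonneg (μ := μ) (f := fun x : E ↦ (1 + ‖x‖) ^ (-a))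
    fun x ↦ by positivity
  refine (integrable_prod_iff hmeas.aestronglyMeasurable).2 ⟨.of_forall fun x ↦ ?_, ?_⟩
  · simpa only [rieszIntegrand, mul_div_assoc] using
      (integrable_one_add_norm_rpow_div ν ha hμ0 hμ x).const_mul ((1 + ‖x‖) ^ (-a))
  · have hdecay : finrank ℝ E < a + μ := by linarith
    refine ((integrable_one_add_norm (μ := ν) hdecay).const_mul C).mono'
      hmeas.norm.stronglyMeasurable.integral_prod_right'.aestronglyMeasurable
      (.of_forall fun x ↦ ?_)
    simp only [Real.norm_of_nonneg (hnonneg _)]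
    rw [Real.norm_of_nonneg (integral_nonneg fun y ↦ hnonneg (x, y))]
    exact hslice x

lemma integrable_rieszIntegrand {M : ℝ} {f : E → ℝ} (ha : finrank ℝ E < a) (hμ0 : 0 ≤ μ)
    (hμ : μ < finrank ℝ E) (hf : Measurable f) (hfM : ∀ x, |f x| ≤ M * (1 + ‖x‖) ^ (-a)) :
    Integrable (rieszIntegrand μ f) (ν.prod ν) :=
  ((integrable_rieszIntegrand_one_add_norm ν ha hμ0 hμ).const_mul (M ^ 2)).mono'
    (measurable_rieszIntegrand μ hf).aestronglyMeasurable
    (.of_forall (abs_rieszIntegrand_le hfM))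

lemma exists_setIntegral_rieszIntegrand_one_add_norm_le (ha : finrank ℝ E < a) (hμ0 : 0 ≤ μ)
    (hμ : μ < finrank ℝ E) :
    ∃ C, 0 ≤ C ∧ ∀ R : ℝ, 0 < R →
      ∫ z in (closedBall (0 : E) R)ᶜ ×ˢ univ, rieszIntegrand μ (fun x ↦ (1 + ‖x‖) ^ (-a)) z
        ∂(ν.prod ν) ≤ C * R ^ (finrank ℝ E - a - μ) := by
  obtain ⟨C, hC, hslice⟩ := exists_integral_rieszIntegrand_one_add_norm_le ν ha hμ0 hμ
  have hK := integrable_rieszIntegrand_one_add_norm ν ha hμ0 hμ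
  have hdecay : finrank ℝ E < a + μ := by linarith
  have hint := (integrable_one_add_norm (μ := ν) hdecay).const_mul C
  refine ⟨C * (2 ^ (a + μ) * ∫ x : E, (1 + ‖x‖) ^ (-(a + μ)) ∂ν),
    mul_nonneg hC (mul_nonneg (by positivity) (integral_nonneg fun x ↦ by positivity)),
    fun R hR ↦ ?_⟩
  rw [setIntegral_prod _ hK.integrableOn]
  simp only [Measure.restrict_univ]
  calc ∫ x in (closedBall (0 : E) R)ᶜ,
        ∫ y, rieszIntegrand μ (fun x ↦ (1 + ‖x‖) ^ (-a)) (x, y) ∂ν ∂ν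
      ≤ ∫ x in (closedBall (0 : E) R)ᶜ, C * (1 + ‖x‖) ^ (-(a + μ)) ∂ν :=
        setIntegral_mono hK.integral_prod_left.integrableOn hint.integrableOn hslice
    _ ≤ C * (2 ^ (a + μ) * (∫ x, (1 + ‖x‖) ^ (-(a + μ)) ∂ν) * R ^ (finrank ℝ E - (a + μ))) := by
        rw [integral_const_mul]
        gcongr
        exact setIntegral_compl_closedBall_one_add_norm_rpow_le ν hdecay hR
    _ = C * (2 ^ (a + μ) * ∫ x, (1 + ‖x‖) ^ (-(a + μ)) ∂ν) * R ^ (finrank ℝ E - a - μ) := by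
        rw [sub_add_eq_sub_sub]
        ring

theorem exists_abs_rieszEnergy_sub_le (ha : finrank ℝ E < a) (hμ0 : 0 ≤ μ) (hμ : μ < finrank ℝ E)
    (M : ℝ) :
    ∃ C, 0 < C ∧ ∀ (R : ℝ) (f g : E → ℝ), 0 < R → Measurable f → Measurable g →
      (∀ x, |f x| ≤ M * (1 + ‖x‖) ^ (-a)) → (∀ x, |g x| ≤ M * (1 + ‖x‖) ^ (-a)) →
      EqOn f g (closedBall 0 R) →
      |rieszEnergy μ ν f - rieszEnergy μ ν g| ≤ C * R ^ (finrank ℝ E - a - μ) := by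
  obtain ⟨C, hC, htail⟩ := exists_setIntegral_rieszIntegrand_one_add_norm_le ν ha hμ0 hμ
  refine ⟨2 * M ^ 2 * (C + C) + 1, by positivity, fun R f g hR hf hg hfM hgM hfg ↦ ?_⟩
  have hf := integrable_rieszIntegrand ν ha hμ0 hμ hf hfM
  have hg := integrable_rieszIntegrand ν ha hμ0 hμ hg hgM
  set S : Set (E × E) := (closedBall 0 R)ᶜ ×ˢ univ
  have hSmeas : MeasurableSet S := measurableSet_closedBall.compl.prod .univ
  set w : E → ℝ := fun x ↦ (1 + ‖x‖) ^ (-a)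
  have hK : Integrable (S.indicator (rieszIntegrand μ w)) (ν.prod ν) :=
    (integrable_rieszIntegrand_one_add_norm ν ha hμ0 hμ).indicator hSmeas
  have hKswap : Integrable (fun z ↦ S.indicator (rieszIntegrand μ w) z.swap) (ν.prod ν) := hK.swap
  have hbound : Integrable (fun z ↦ 2 * M ^ 2 * (S.indicator (rieszIntegrand μ w) z +
      S.indicator (rieszIntegrand μ w) z.swap)) (ν.prod ν) := (hK.add hKswap).const_mul _
  rw [rieszEnergy, rieszEnergy, ← integral_prod _ hf, ← integral_prod _ hg, ← integral_sub hf hg]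
  calc ‖∫ z, rieszIntegrand μ f z - rieszIntegrand μ g z ∂ν.prod ν‖
      ≤ ∫ z, 2 * M ^ 2 * (S.indicator (rieszIntegrand μ w) z +
          S.indicator (rieszIntegrand μ w) z.swap) ∂ν.prod ν :=
        norm_integral_le_of_norm_le hbound (.of_forall
          (abs_rieszIntegrand_sub_le (fun x ↦ by positivity) hfM hgM hfg))
    _ = 2 * M ^ 2 * (∫ z in S, rieszIntegrand μ w z ∂ν.prod ν +
          ∫ z in S, rieszIntegrand μ w z ∂ν.prod ν) := by
        rw [integral_const_mul, integral_add hK hKswap,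
          integral_prod_swap (S.indicator (rieszIntegrand μ w)), integral_indicator hSmeas]
    _ ≤ 2 * M ^ 2 * (C * R ^ (finrank ℝ E - a - μ) + C * R ^ (finrank ℝ E - a - μ)) := by
        gcongr <;> exact htail R hR
    _ = 2 * M ^ 2 * (C + C) * R ^ (finrank ℝ E - a - μ) := by ring
    _ ≤ (2 * M ^ 2 * (C + C) + 1) * R ^ (finrank ℝ E - a - μ) := by gcongr; linarith

end Haar

section Bubble

variable {E : Type*} [NormedAddCommGroup E]

/-- The unnormalized Aubin–Talenti instanton `U_ε` in dimension `n`. The dimension is a real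
parameter, not tied to that of `E`. -/
def aubinTalentiBubble (n ε : ℝ) (x : E) : ℝ :=
  (ε / (ε ^ 2 + ‖x‖ ^ 2)) ^ ((n - 2) / 2)

/-- The upper critical exponent `2_μ^*` of the Hardy–Littlewood–Sobolev inequality in dimension
`n`. -/
def upperCriticalExponent (n μ : ℝ) : ℝ :=
  (2 * n - μ) / (n - 2)

lemma half_mul_upperCriticalExponent {n : ℝ} (hn : n ≠ 2) (μ : ℝ) :
    (n - 2) / 2 * upperCriticalExponent n μ = (2 * n - μ) / 2 := by
  have : n - 2 ≠ 0 := sub_ne_zero.2 hn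
  rw [upperCriticalExponent]
  field_simp

lemma aubinTalentiBubble_nonneg (n : ℝ) {ε : ℝ} (hε : 0 ≤ ε) (x : E) :
    0 ≤ aubinTalentiBubble n ε x := by
  unfold aubinTalentiBubble
  positivity

lemma measurable_aubinTalentiBubble [MeasurableSpace E] [OpensMeasurableSpace E] (n ε : ℝ) :
    Measurable (aubinTalentiBubble n ε : E → ℝ) := by
  unfold aubinTalentiBubble
  fun_prop

lemma aubinTalentiBubble_eq_rescale [NormedSpace ℝ E] (n : ℝ) {ε : ℝ} (hε : 0 < ε) (x : E) :
    aubinTalentiBubble n ε x = ε ^ (-((n - 2) / 2)) * aubinTalentiBubble n 1 (ε⁻¹ • x) := by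
  have hbase : ε / (ε ^ 2 + ‖x‖ ^ 2) = ε⁻¹ * (1 / (1 ^ 2 + ‖ε⁻¹ • x‖ ^ 2)) := by
    rw [norm_smul, norm_inv, Real.norm_of_nonneg hε.le]
    field_simp
  rw [aubinTalentiBubble, aubinTalentiBubble, hbase, Real.mul_rpow (by positivity) (by positivity),
    Real.inv_rpow hε.le, Real.rpow_neg hε.le]

lemma aubinTalentiBubble_one_rpow_le {n μ : ℝ} (hn : n ≠ 2) (hμ : μ < 2 * n) (x : E) :
    aubinTalentiBubble n 1 x ^ upperCriticalExponent n μ ≤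
      2 ^ ((2 * n - μ) / 2) * (1 + ‖x‖) ^ (-(2 * n - μ)) := by
  calc aubinTalentiBubble n 1 x ^ upperCriticalExponent n μ
      = (1 + ‖x‖ ^ 2) ^ (-(2 * n - μ) / 2) := by
        rw [aubinTalentiBubble, ← Real.rpow_mul (by positivity), half_mul_upperCriticalExponent hn,
          one_pow, one_div, Real.inv_rpow (by positivity), ← Real.rpow_neg (by positivity), neg_div]
    _ ≤ _ := rpow_neg_one_add_norm_sq_le x (by linarith)

lemma mul_aubinTalentiBubble_rpow_eq_rescale [NormedSpace ℝ E] {n μ ε : ℝ} (hn : n ≠ 2)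
    (hε : 0 < ε) {ψ : E → ℝ} (hψ0 : ∀ x, 0 ≤ ψ x) (x : E) :
    (ψ x * aubinTalentiBubble n ε x) ^ upperCriticalExponent n μ =
      ε ^ (-((2 * n - μ) / 2)) *
        (ψ (ε • ε⁻¹ • x) * aubinTalentiBubble n 1 (ε⁻¹ • x)) ^ upperCriticalExponent n μ := by
  have hbubble := aubinTalentiBubble_nonneg n zero_le_one (ε⁻¹ • x)
  rw [smul_inv_smul₀ hε.ne', aubinTalentiBubble_eq_rescale n hε, mul_left_comm,
    Real.mul_rpow (by positivity) (mul_nonneg (hψ0 x) hbubble), ← Real.rpow_mul hε.le, neg_mul,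
    half_mul_upperCriticalExponent hn]

lemma exists_abs_rieszEnergy_mul_aubinTalentiBubble_sub_le [NormedSpace ℝ E] [FiniteDimensional ℝ E]
    [MeasurableSpace E] [BorelSpace E] (ν : Measure E) [ν.IsAddHaarMeasure] {μ : ℝ}
    (hn : (2 : ℝ) < finrank ℝ E) (hμ0 : 0 ≤ μ) (hμ : μ < finrank ℝ E) :
    ∃ C, 0 < C ∧ ∀ (R : ℝ) (φ : E → ℝ), 0 < R → Measurable φ → (∀ x, 0 ≤ φ x) → (∀ x, φ x ≤ 1) →
      EqOn φ 1 (closedBall 0 R) →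
      |rieszEnergy μ ν (fun x ↦ (φ x * aubinTalentiBubble (finrank ℝ E) 1 x) ^
          upperCriticalExponent (finrank ℝ E) μ) -
        rieszEnergy μ ν (fun x ↦ aubinTalentiBubble (finrank ℝ E) 1 x ^
          upperCriticalExponent (finrank ℝ E) μ)| ≤ C * R ^ (-finrank ℝ E : ℝ) := by
  set n : ℝ := (finrank ℝ E : ℝ)
  set p := upperCriticalExponent n μ
  have hp : 0 ≤ p := div_nonneg (by linarith) (by linarith)
  set U : E → ℝ := aubinTalentiBubble n 1
  have hU : Measurable U := measurable_aubinTalentiBubble n 1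
  have hU0 : ∀ x, 0 ≤ U x := aubinTalentiBubble_nonneg n zero_le_one
  have hUp : ∀ x, U x ^ p ≤ 2 ^ ((2 * n - μ) / 2) * (1 + ‖x‖) ^ (-(2 * n - μ)) :=
    aubinTalentiBubble_one_rpow_le hn.ne' (by linarith)
  obtain ⟨C, hC, hcompare⟩ := exists_abs_rieszEnergy_sub_le ν (a := 2 * n - μ) (by linarith) hμ0 hμ
    (2 ^ ((2 * n - μ) / 2))
  refine ⟨C, hC, fun R φ hR hφ hφ0 hφ1 hφR ↦ ?_⟩
  have hφU0 (x : E) : 0 ≤ φ x * U x := mul_nonneg (hφ0 x) (hU0 x)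
  have hφU (x : E) : (φ x * U x) ^ p ≤ U x ^ p :=
    Real.rpow_le_rpow (hφU0 x) (mul_le_of_le_one_left (hU0 x) (hφ1 x)) hp
  have heq : EqOn (fun x ↦ (φ x * U x) ^ p) (fun x ↦ U x ^ p) (closedBall 0 R) := fun x hx ↦ by
    simp only [hφR hx, Pi.one_apply, one_mul]
  rw [show -n = n - (2 * n - μ) - μ by ring]
  refine hcompare R _ _ hR (by fun_prop) (by fun_prop) (fun x ↦ ?_) (fun x ↦ ?_) heq
  · rw [abs_of_nonneg (Real.rpow_nonneg (hφU0 x) p)]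
    exact (hφU x).trans (hUp x)
  · rw [abs_of_nonneg (Real.rpow_nonneg (hU0 x) p)]
    exact hUp x

end Bubble

theorem statement15_general {E : Type*} [NormedAddCommGroup E] [NormedSpace ℝ E]
    [FiniteDimensional ℝ E] [MeasurableSpace E] [BorelSpace E] (ν : Measure E) [ν.IsAddHaarMeasure]
    {n : ℕ} (hE : finrank ℝ E = n) (hn : 3 ≤ n) {μ δ : ℝ} (hμ0 : 0 ≤ μ) (hμn : μ < n) (hδ : 0 < δ)
    {ψ : E → ℝ} (hψ : Measurable ψ) (hψ0 : ∀ x, 0 ≤ ψ x) (hψ1 : ∀ x, ψ x ≤ 1)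
    (hψin : ∀ x, ‖x‖ ≤ δ → ψ x = 1) :
    ∃ C : ℝ, 0 < C ∧ ∀ ε : ℝ, 0 < ε →
      |rieszEnergy μ ν (fun x ↦ (ψ x * aubinTalentiBubble n ε x) ^ upperCriticalExponent n μ) -
        rieszEnergy μ ν (fun x ↦ aubinTalentiBubble n 1 x ^ upperCriticalExponent n μ)| ≤
        C * ε ^ (n : ℝ) := by
  subst hE
  have hn2 : (2 : ℝ) < finrank ℝ E := by exact_mod_cast hn
  obtain ⟨C, hC, hcutoff⟩ :=
    exists_abs_rieszEnergy_mul_aubinTalentiBubble_sub_le ν hn2 hμ0 hμn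
  refine ⟨C * δ ^ (-finrank ℝ E : ℝ), by positivity, fun ε hε ↦ ?_⟩
  have hψε : EqOn (fun x ↦ ψ (ε • x)) 1 (closedBall 0 (δ / ε)) := fun x hx ↦ hψin _ <| by
    rwa [mem_closedBall_zero_iff, le_div_iff₀' hε, ← Real.norm_of_nonneg hε.le, ← norm_smul] at hx
  have hrate : C * (δ / ε) ^ (-finrank ℝ E : ℝ) =
      C * δ ^ (-finrank ℝ E : ℝ) * ε ^ (finrank ℝ E : ℝ) := by
    rw [Real.div_rpow hδ.le hε.le, Real.rpow_neg hε.le, div_inv_eq_mul, mul_assoc]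
  simp_rw [mul_aubinTalentiBubble_rpow_eq_rescale hn2.ne' hε hψ0]
  rw [rieszEnergy_rescale ν (fun x ↦ (ψ (ε • x) * aubinTalentiBubble _ 1 x) ^ _) hε, ← hrate]
  exact hcutoff (δ / ε) _ (by positivity) (by fun_prop) (fun x ↦ hψ0 _) (fun x ↦ hψ1 _) hψε

end

/-- The critical Choquard energy of the truncated bubble differs from that of the
full bubble by at most `O(εⁿ)`. -/
theorem statement15 (n : ℕ) (hn : 3 ≤ n) (μ : ℝ) (hμ0 : 0 < μ) (hμn : μ < n)
    (δ : ℝ) (hδ : 0 < δ)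
    (ψ : EuclideanSpace ℝ (Fin n) → ℝ) (hψ : ContDiff ℝ (⊤ : ℕ∞) ψ)
    (hψ0 : ∀ x, 0 ≤ ψ x) (hψ1 : ∀ x, ψ x ≤ 1)
    (hψin : ∀ x : EuclideanSpace ℝ (Fin n), ‖x‖ ≤ δ → ψ x = 1)
    (hψout : ∀ x : EuclideanSpace ℝ (Fin n), 2 * δ ≤ ‖x‖ → ψ x = 0) :
    ∃ C : ℝ, 0 < C ∧ ∀ ε : ℝ, 0 < ε → ε < 1 →
      |(∫ x : EuclideanSpace ℝ (Fin n), ∫ y : EuclideanSpace ℝ (Fin n),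
          (ψ x * (ε / (ε ^ 2 + ‖x‖ ^ 2)) ^ (((n : ℝ) - 2) / 2)) ^
              ((2 * (n : ℝ) - μ) / ((n : ℝ) - 2)) *
            (ψ y * (ε / (ε ^ 2 + ‖y‖ ^ 2)) ^ (((n : ℝ) - 2) / 2)) ^
              ((2 * (n : ℝ) - μ) / ((n : ℝ) - 2)) / ‖x - y‖ ^ μ) -
        (∫ x : EuclideanSpace ℝ (Fin n), ∫ y : EuclideanSpace ℝ (Fin n),
          (((1 : ℝ) / (1 + ‖x‖ ^ 2)) ^ (((n : ℝ) - 2) / 2)) ^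
              ((2 * (n : ℝ) - μ) / ((n : ℝ) - 2)) *
            (((1 : ℝ) / (1 + ‖y‖ ^ 2)) ^ (((n : ℝ) - 2) / 2)) ^
              ((2 * (n : ℝ) - μ) / ((n : ℝ) - 2)) / ‖x - y‖ ^ μ)| ≤
        C * ε ^ (n : ℝ) := by
  obtain ⟨C, hC, hbound⟩ := statement15_general volume finrank_euclideanSpace_fin hn hμ0.le hμn hδ
    hψ.continuous.measurable hψ0 hψ1 hψin
  exact ⟨C, hC, fun ε hε _ ↦ by simpa only [rieszEnergy, rieszIntegrand, aubinTalentiBubble,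
    upperCriticalExponent, one_pow] using hbound ε hε⟩
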